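/- Let G be a finite abelian group, H a subgroup of G, and m a natural number. Let f be a ℂ[G][u]-linear endomorphism of the free module (ℂ[G][u])^m, where ℂ[G][u] denotes the polynomial ring over the group algebra ℂ[G]. Regard (ℂ[G][u])^m as a module over ℂ[H][u] via the injective ring homomorphism ℂ[H][u] → ℂ[G][u] applying, coefficientwise, the inclusion-induced map ℂ[H] → ℂ[G]. Then det_{ℂ[H][u]}(f) = N_{G/H}(det_{ℂ[G][u]}(f)), where det_{ℂ[H][u]}(f) is the determinant of f viewed as a ℂ[H][u]-linear endomorphism of (ℂ[G][u])^m, and N_{G/H}(Q) ∈ ℂ[H][u] denotes the determinant over ℂ[H][u] of the multiplication-by-Q endomorphism of ℂ[G][u]. -/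

import Mathlib

/-- The group algebra of a commutative group is free over the group algebra of any subgroup,
with a system of coset representatives as a basis. -/
theorem MonoidAlgebra.free_of_subgroup (R G : Type*) [CommRing R] [CommGroup G] (H : Subgroup G) :
    letI : Algebra (MonoidAlgebra R H) (MonoidAlgebra R G) :=
      (MonoidAlgebra.mapDomainRingHom R H.subtype).toAlgebra
    Module.Free (MonoidAlgebra R H) (MonoidAlgebra R G) := by
  classical
  let : Algebra (MonoidAlgebra R H) (MonoidAlgebra R G) :=
    (MonoidAlgebra.mapDomainRingHom R H.subtype).toAlgebra
  let v : G ⧸ H → MonoidAlgebra R G := fun q ↦ single q.out 1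
  have smul_def (x : MonoidAlgebra R H) (y : MonoidAlgebra R G) :
      x • y = mapDomain H.subtype x * y := rfl
  have coeff_smul (x : MonoidAlgebra R H) (q q' : G ⧸ H) (h : H) :
      (x • v q).coeff (h * q'.out) = if q = q' then x.coeff h else 0 := by
    rw [smul_def, coeff_mul_single_apply, mul_one, coeff_mapDomain]
    split_ifs with hq
    · subst hq
      rw [mul_inv_cancel_right]
      exact Finsupp.mapDomain_apply H.subtype_injective x.coeff h
    · refine Finsupp.mapDomain_of_notMem_range x.coeff _ ?_
      rintro ⟨k, hk⟩
      apply hq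
      rw [← q.out_eq', ← q'.out_eq', QuotientGroup.eq]
      have : q.out⁻¹ * q'.out = (h⁻¹ * k : H) := by
        simp only [Subgroup.subtype_apply] at hk
        rw [Subgroup.coe_mul, hk, Subgroup.coe_inv]
        group
        rw [mul_comm]
      exact this ▸ (h⁻¹ * k).2
  have hli : LinearIndependent (MonoidAlgebra R H) v := by
    rw [linearIndependent_iff']
    intro s g hg q hq
    ext h
    have := congrArg (fun z ↦ z.coeff (h * q.out)) hg
    simpa [coeff_sum, Finsupp.finsetSum_apply, coeff_smul, hq] using this
  have hspan : ⊤ ≤ Submodule.span (MonoidAlgebra R H) (Set.range v) := by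
    rintro x -
    induction x using induction_linear with
    | zero => exact zero_mem _
    | add x y hx hy => exact add_mem hx hy
    | single g r =>
      let q : G ⧸ H := g
      have hmem : q.out⁻¹ * g ∈ H := by
        rw [← QuotientGroup.eq]; exact q.out_eq'
      have : single g r = (single ⟨_, hmem⟩ r : MonoidAlgebra R H) • v q := by
        rw [smul_def, mapDomain_single, single_mul_single, mul_one, Subgroup.subtype_apply,
          mul_comm, mul_inv_cancel_left]
      rw [this]
      exact Submodule.smul_mem _ _ (Submodule.subset_span ⟨q, rfl⟩)
  exact .of_basis (Module.Basis.mk hli hspan)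

/-- If `A` is free over `R`, then `A[X]` is free over `R[X]`. -/
theorem Polynomial.free_of_free (R A : Type*) [CommRing R] [CommRing A] [Algebra R A]
    [Module.Free R A] :
    letI := Polynomial.algebra R A
    Module.Free (Polynomial R) (Polynomial A) :=
  let := Polynomial.algebra R A
  Algebra.IsPushout.out (R := R) (S := Polynomial R) (R' := A) (S' := Polynomial A) |>.free

/-- Let `G` be a finite abelian group, `H ≤ G`, `m ∈ ℕ`, and `f` a
`ℂ[G][u]`-linear endomorphism of the free module `(ℂ[G][u])^m`.  Regarding `(ℂ[G][u])^m` as a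
module over `ℂ[H][u]` via the inclusion-induced ring homomorphism `ℂ[H][u] → ℂ[G][u]`, the
determinant of `f` over `ℂ[H][u]` equals `N_{G/H}(det_{ℂ[G][u]}(f))`, where `N_{G/H}(Q)` is the
determinant over `ℂ[H][u]` of the multiplication-by-`Q` endomorphism of `ℂ[G][u]`. -/
theorem stmt11 (G : Type*) [CommGroup G] [Finite G] (H : Subgroup G) (m : ℕ)
    (f : (Fin m → Polynomial (MonoidAlgebra ℂ G)) →ₗ[Polynomial (MonoidAlgebra ℂ G)]
      (Fin m → Polynomial (MonoidAlgebra ℂ G))) :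
    letI : Algebra (Polynomial (MonoidAlgebra ℂ ↥H)) (Polynomial (MonoidAlgebra ℂ G)) :=
      (Polynomial.mapRingHom (MonoidAlgebra.mapDomainRingHom ℂ H.subtype)).toAlgebra
    LinearMap.det (LinearMap.restrictScalars (Polynomial (MonoidAlgebra ℂ ↥H)) f) =
      LinearMap.det
        (LinearMap.mulLeft (Polynomial (MonoidAlgebra ℂ ↥H)) (LinearMap.det f)) := by
  let : Algebra (MonoidAlgebra ℂ H) (MonoidAlgebra ℂ G) :=
    (MonoidAlgebra.mapDomainRingHom ℂ H.subtype).toAlgebra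
  let : Algebra (Polynomial (MonoidAlgebra ℂ H)) (Polynomial (MonoidAlgebra ℂ G)) :=
    (Polynomial.mapRingHom (MonoidAlgebra.mapDomainRingHom ℂ H.subtype)).toAlgebra
  have := MonoidAlgebra.free_of_subgroup ℂ G H
  have : Module.Free (Polynomial (MonoidAlgebra ℂ H)) (Polynomial (MonoidAlgebra ℂ G)) :=
    Polynomial.free_of_free _ _
  exact LinearMap.det_restrictScalars
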